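/- arXiv:math/0410600 — 3 statements merged into one kernel-verified Lean document; each statement's English description precedes it below -/
import Mathlib

section
/- Let k be a field and n a natural number. For every homogeneous polynomial p of degree 2 in the variables X_0,…,X_n over k there exists a k-linear functional φ on the second exterior power ⋀²(k^{n+1} × k^{n+1}) such that p(v) = φ((v,0) ∧ (0,v)) for every v ∈ k^{n+1}. -/
/-- The wedge `x ∧ y` of two vectors, as an element of the second exterior power
`⋀[k]^2 M` (viewed as a submodule of the exterior algebra). -/
noncomputable def wedgePair (k : Type*) [Field k] {M : Type*} [AddCommGroup M] [Module k M]
    (x y : M) : ⋀[k]^2 M :=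
  ⟨ExteriorAlgebra.ιMulti k 2 ![x, y],
    ExteriorAlgebra.ιMulti_range k 2 (Set.mem_range_self ![x, y])⟩

/-- The coordinate functional sending `(v,0) ∧ (0,v)` to `v i * v j`. -/
lemma exists_functional_coord (k : Type*) [Field k] (n : ℕ) (i j : Fin (n + 1)) :
    ∃ φ : ⋀[k]^2 ((Fin (n + 1) → k) × (Fin (n + 1) → k)) →ₗ[k] k,
      ∀ v : Fin (n + 1) → k,
        φ (wedgePair k ((v, 0) : (Fin (n + 1) → k) × (Fin (n + 1) → k)) (0, v)) = v i * v j := by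
  let L : ((Fin (n + 1) → k) × (Fin (n + 1) → k)) →ₗ[k] (Fin 2 → k) :=
    LinearMap.pi ![(LinearMap.proj i).comp (LinearMap.fst k _ _),
      (LinearMap.proj j).comp (LinearMap.snd k _ _)]
  refine ⟨exteriorPower.alternatingMapLinearEquiv
    ((Matrix.detRowAlternating (n := Fin 2) (R := k)).compLinearMap L), fun v => ?_⟩
  have h : wedgePair k ((v, 0) : (Fin (n + 1) → k) × (Fin (n + 1) → k)) (0, v)
      = exteriorPower.ιMulti k 2 ![(v, 0), (0, v)] := rfl
  rw [h, exteriorPower.alternatingMapLinearEquiv_apply_ιMulti,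
    AlternatingMap.compLinearMap_apply]
  refine (Matrix.det_fin_two (Matrix.of fun a => L (![(v, 0), (0, v)] a))).trans ?_
  simp [L]

/-- A degree 2 monomial evaluates to a product of two coordinates. -/
lemma exists_pair_of_degree_two (k : Type*) [Field k] (n : ℕ) (d : Fin (n + 1) →₀ ℕ)
    (hd : d.degree = 2) :
    ∃ i j : Fin (n + 1), ∀ v : Fin (n + 1) → k, (d.prod fun a e => v a ^ e) = v i * v j := by
  have hc : Multiset.card (Finsupp.toMultiset d) = 2 := by
    rw [Finsupp.card_toMultiset]; exact hd
  obtain ⟨i, j, hij⟩ := Multiset.card_eq_two.mp hc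
  refine ⟨i, j, fun v => ?_⟩
  have h2 : ((Finsupp.toMultiset d).map v).prod = v i * v j := by rw [hij]; simp
  rw [← h2, Finsupp.toMultiset_map, Finsupp.prod_toMultiset, Finsupp.prod_mapDomain_index] <;>
    simp [pow_add]

/-- Completeness of the linear system: every homogeneous polynomial `p` of degree 2 in
`X_0, …, X_n` arises by pulling back some linear functional on `⋀²(k^{n+1} × k^{n+1})`
along `v ↦ (v,0) ∧ (0,v)`. -/
theorem quadric_is_pluecker_pullback (k : Type*) [Field k] (n : ℕ)
    (p : MvPolynomial (Fin (n + 1)) k)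
    (hp : p ∈ MvPolynomial.homogeneousSubmodule (Fin (n + 1)) k 2) :
    ∃ φ : ⋀[k]^2 ((Fin (n + 1) → k) × (Fin (n + 1) → k)) →ₗ[k] k,
      ∀ v : Fin (n + 1) → k,
        MvPolynomial.eval v p =
          φ (wedgePair k ((v, 0) : (Fin (n + 1) → k) × (Fin (n + 1) → k)) (0, v)) := by
  have key : ∀ d : Fin (n + 1) →₀ ℕ,
      ∃ φ : ⋀[k]^2 ((Fin (n + 1) → k) × (Fin (n + 1) → k)) →ₗ[k] k, d ∈ p.support →
      ∀ v : Fin (n + 1) → k,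
        φ (wedgePair k ((v, 0) : (Fin (n + 1) → k) × (Fin (n + 1) → k)) (0, v)) =
          d.prod fun a e => v a ^ e := by
    intro d
    by_cases hd : d ∈ p.support
    · have hdeg : d.degree = 2 := by
        rw [MvPolynomial.mem_homogeneousSubmodule] at hp
        rw [Finsupp.degree_eq_weight_one]
        exact hp (MvPolynomial.mem_support_iff.mp hd)
      obtain ⟨i, j, hij⟩ := exists_pair_of_degree_two k n d hdeg
      obtain ⟨φ, hφ⟩ := exists_functional_coord k n i j
      exact ⟨φ, fun _ v => by rw [hφ, hij]⟩
    · exact ⟨0, fun h => absurd h hd⟩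
  choose φ hφ using key
  refine ⟨∑ d ∈ p.support, p.coeff d • φ d, fun v => ?_⟩
  rw [MvPolynomial.eval_eq', LinearMap.sum_apply]
  refine Finset.sum_congr rfl fun d hd => ?_
  rw [LinearMap.smul_apply, hφ d hd v, smul_eq_mul, Finsupp.prod_fintype _ _ (by simp)]
end

section
/- Let k be a field and n a natural number. Define two (n+2)-tuples of polynomials in k[X_0,…,X_n]: a_j = X_j for 0 ≤ j ≤ n and a_{n+1} = 0; b_0 = 0 and b_j = X_{j-1} for 1 ≤ j ≤ n+1 (these are the rows of the 2×(n+2) matrix [[X_0, X_1, …, X_n, 0], [0, X_0, …, X_{n-1}, X_n]]). Then the (n+2 choose 2) minors m_{ij} = a_i·b_j − a_j·b_i, for 0 ≤ i < j ≤ n+1, form a basis of the k-vector space of homogeneous polynomials of degree 2 in the variables X_0,…,X_n (the degree-2 homogeneous component of the polynomial ring k[X_0,…,X_n]). -/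
/-- First row `(X_0, X_1, …, X_n, 0)` of the `2 × (n+2)` matrix. -/
noncomputable def rowA (k : Type*) [Field k] (n : ℕ) :
    Fin (n + 2) → MvPolynomial (Fin (n + 1)) k :=
  fun j => if h : (j : ℕ) < n + 1 then MvPolynomial.X ⟨(j : ℕ), h⟩ else 0

/-- Second row `(0, X_0, …, X_{n-1}, X_n)` of the `2 × (n+2)` matrix. -/
noncomputable def rowB (k : Type*) [Field k] (n : ℕ) :
    Fin (n + 2) → MvPolynomial (Fin (n + 1)) k :=
  fun j =>
    if h : (j : ℕ) = 0 then 0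
    else MvPolynomial.X ⟨(j : ℕ) - 1, by have := j.isLt; omega⟩

/-- The `2 × 2` minor `m_{ij} = a_i·b_j − a_j·b_i` of the matrix with rows `rowA`, `rowB`,
indexed by pairs `i < j`. -/
noncomputable def minor (k : Type*) [Field k] (n : ℕ)
    (p : {p : Fin (n + 2) × Fin (n + 2) // p.1 < p.2}) : MvPolynomial (Fin (n + 1)) k :=
  rowA k n p.1.1 * rowB k n p.1.2 - rowA k n p.1.2 * rowB k n p.1.1

/-- The variable with natural index, zero beyond the range. -/
noncomputable def xv (k : Type*) [Field k] (n : ℕ) (i : ℕ) : MvPolynomial (Fin (n + 1)) k :=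
  if h : i < n + 1 then MvPolynomial.X ⟨i, h⟩ else 0

theorem rowB_succ (k : Type*) [Field k] (n : ℕ) (i : ℕ) (h : i + 1 < n + 2) :
    rowB k n ⟨i + 1, h⟩ = xv k n i := by
  have hi : i < n + 1 := by omega
  simp only [rowB, xv, hi]
  simp

theorem xv_fin (k : Type*) [Field k] (n : ℕ) (a : Fin (n + 1)) :
    xv k n a = MvPolynomial.X a := by
  simp only [xv, a.isLt, dif_pos]

theorem deg_split {n m : ℕ} (d : Fin (n + 1) →₀ ℕ) (hdeg : d.degree = m + 1) :
    ∃ a e, d = Finsupp.single a 1 + e ∧ e.degree = m := by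
  have hd0 : d ≠ 0 := by rintro rfl; simp at hdeg
  obtain ⟨a, ha⟩ := Finsupp.ne_iff.mp hd0
  have hle : Finsupp.single a 1 ≤ d := by
    rw [Finsupp.single_le_iff]; exact Nat.one_le_iff_ne_zero.mpr ha
  obtain ⟨e, rfl⟩ := exists_add_of_le hle
  refine ⟨a, e, rfl, ?_⟩
  rw [map_add, Finsupp.degree_single] at hdeg
  omega

theorem xv_mul_mem (k : Type*) [Field k] (n : ℕ) (i : ℕ) : ∀ j, i ≤ j →
    xv k n i * xv k n j ∈ Submodule.span k (Set.range (minor k n)) := by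
  induction i with
  | zero =>
    intro j _
    by_cases hj : j < n + 1
    · refine Submodule.subset_span ⟨⟨(⟨0, by omega⟩, ⟨j + 1, by omega⟩), by
        simp only [Fin.mk_lt_mk]; omega⟩, ?_⟩
      simp [minor, rowA, rowB, xv, hj]
    · simp [xv, hj]
  | succ i ih =>
    intro j hij
    by_cases hj : j < n + 1
    · have h1 := ih (j + 1) (by omega)
      have h2 : minor k n ⟨(⟨i + 1, by omega⟩, ⟨j + 1, by omega⟩), by
          simp only [Fin.mk_lt_mk]; omega⟩ ∈
          Submodule.span k (Set.range (minor k n)) := Submodule.subset_span ⟨_, rfl⟩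
      have h3 := Submodule.add_mem _ h2 h1
      have e1 : minor k n ⟨(⟨i + 1, by omega⟩, ⟨j + 1, by omega⟩), by
          simp only [Fin.mk_lt_mk]; omega⟩ =
          xv k n (i + 1) * xv k n j - xv k n (j + 1) * xv k n i := by
        simp only [minor]
        rw [rowB_succ, rowB_succ]
        rfl
      rw [e1] at h3
      convert h3 using 1
      generalize xv k n (j + 1) = u
      ring
    · simp [xv, hj]

theorem X_mul_mem (k : Type*) [Field k] (n : ℕ) (a b : Fin (n + 1)) :
    (MvPolynomial.X a * MvPolynomial.X b : MvPolynomial (Fin (n + 1)) k) ∈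
      Submodule.span k (Set.range (minor k n)) := by
  rcases le_total a b with h | h
  · have := xv_mul_mem k n a b h
    simpa only [xv_fin] using this
  · have := xv_mul_mem k n b a h
    rw [mul_comm]
    simpa only [xv_fin] using this

theorem rowA_hom (k : Type*) [Field k] (n : ℕ) (j) : (rowA k n j).IsHomogeneous 1 := by
  unfold rowA
  split_ifs
  · exact MvPolynomial.isHomogeneous_X _ _
  · exact MvPolynomial.isHomogeneous_zero _ _ _

theorem rowB_hom (k : Type*) [Field k] (n : ℕ) (j) : (rowB k n j).IsHomogeneous 1 := by
  unfold rowB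
  split_ifs
  · exact MvPolynomial.isHomogeneous_zero _ _ _
  · exact MvPolynomial.isHomogeneous_X _ _

theorem span_minor (k : Type*) [Field k] (n : ℕ) :
    Submodule.span k (Set.range (minor k n)) =
        MvPolynomial.homogeneousSubmodule (Fin (n + 1)) k 2 := by
  apply le_antisymm
  · rw [Submodule.span_le]
    rintro _ ⟨p, rfl⟩
    exact ((rowA_hom k n _).mul (rowB_hom k n _)).sub ((rowA_hom k n _).mul (rowB_hom k n _))
  · intro p hp
    rw [p.as_sum]
    refine Submodule.sum_mem _ fun d hd => ?_
    have hdeg : d.degree = 2 := by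
      have h := hp (MvPolynomial.mem_support_iff.mp hd)
      rw [Finsupp.degree_eq_weight_one]; exact h
    obtain ⟨a, e, rfl, he⟩ := deg_split d hdeg
    obtain ⟨b, f, rfl, hf⟩ := deg_split e he
    obtain rfl := (Finsupp.degree_eq_zero_iff f).mp hf
    rw [add_zero]
    have := Submodule.smul_mem _ (p.coeff (Finsupp.single a 1 + Finsupp.single b 1))
      (X_mul_mem k n a b)
    simpa [MvPolynomial.X, MvPolynomial.monomial_mul, MvPolynomial.smul_monomial] using this

/-- The leading exponent of the minor. -/
noncomputable def lexp (n : ℕ) (p : {p : Fin (n + 2) × Fin (n + 2) // p.1 < p.2}) :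
    Fin (n + 1) →₀ ℕ :=
  Finsupp.single ⟨p.1.1, by have := p.2; have := p.1.2.2; omega⟩ 1 +
    Finsupp.single ⟨(p.1.2 : ℕ) - 1, by have := p.1.2.2; omega⟩ 1

theorem lexp_inj (n : ℕ) : Function.Injective (lexp n) := by
  rintro ⟨⟨⟨a, ha⟩, ⟨b, hb⟩⟩, hab⟩ ⟨⟨⟨c, hc⟩, ⟨d, hd⟩⟩, hcd⟩ h
  simp only [lexp, Fin.mk_lt_mk] at h hab hcd
  rw [Finsupp.single_add_single_eq_single_add_single one_ne_zero one_ne_zero] at h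
  simp only [Fin.mk.injEq, Subtype.mk.injEq, Prod.mk.injEq] at h ⊢
  omega

theorem linInd_minor (k : Type*) [Field k] (n : ℕ) : LinearIndependent k (minor k n) := by
  rw [linearIndependent_iff_card_le_finrank_span]
  have h1 := (MvPolynomial.basisMonomials (Fin (n + 1)) k).linearIndependent.comp _ (lexp_inj n)
  have h2 := linearIndependent_iff_card_le_finrank_span.mp h1
  refine h2.trans ?_
  have : FiniteDimensional k (Submodule.span k (Set.range (minor k n))) :=
    FiniteDimensional.span_of_finite k (Set.finite_range _)
  refine Submodule.finrank_mono ?_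
  rw [Submodule.span_le]
  rintro _ ⟨p, rfl⟩
  have := X_mul_mem k n ⟨p.1.1, by have := p.2; have := p.1.2.2; omega⟩
    ⟨(p.1.2 : ℕ) - 1, by have := p.1.2.2; omega⟩
  simpa [MvPolynomial.X, MvPolynomial.monomial_mul, lexp] using this

/-- The `(n+2 choose 2)` minors `m_{ij} = a_i·b_j − a_j·b_i`, `0 ≤ i < j ≤ n+1`, of the
matrix `[[X_0, …, X_n, 0], [0, X_0, …, X_n]]` form a basis of the space of homogeneous
polynomials of degree 2 in `X_0, …, X_n`: they are linearly independent and span it. -/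
theorem minors_form_basis_of_quadrics (k : Type*) [Field k] (n : ℕ) :
    LinearIndependent k (minor k n) ∧
      Submodule.span k (Set.range (minor k n)) =
        MvPolynomial.homogeneousSubmodule (Fin (n + 1)) k 2 := by
  exact ⟨linInd_minor k n, span_minor k n⟩
end

section
/- Let k be an algebraically closed field and n a natural number. Let V_0 and W_0 be (n+1)-dimensional subspaces of k^{n+2} and let φ : V_0 → W_0 be a k-linear isomorphism such that φ(v) does not lie in the span of v for any nonzero v ∈ V_0. Define inductively W_i = φ(V_i) and V_{i+1} = V_i ∩ W_i. Then for every i with 0 ≤ i ≤ n+1 the subspace V_i has dimension exactly n+1−i; in particular V_{i+1} is strictly contained in V_i for 0 ≤ i ≤ n. -/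
/-- Let `V_0, W_0` be hyperplanes of `k^{n+2}` (`k` algebraically closed) and
`φ : V_0 ≃ W_0` a linear isomorphism with `φ(v) ∉ span{v}` for every nonzero `v ∈ V_0`.
Setting `W_i = φ(V_i)` and `V_{i+1} = V_i ⊓ W_i`, the subspace `V_i` has dimension
exactly `n+1-i` for `0 ≤ i ≤ n+1`; in particular `V_{i+1} ⊊ V_i` for `0 ≤ i ≤ n`. -/
theorem flag_drops_by_one (k : Type*) [Field k] [IsAlgClosed k] (n : ℕ)
    (V0 W0 : Submodule k (Fin (n + 2) → k))
    (hV0dim : Module.finrank k ↥V0 = n + 1) (hW0dim : Module.finrank k ↥W0 = n + 1)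
    (φ : V0 ≃ₗ[k] W0)
    (hφ : ∀ v : V0, (v : Fin (n + 2) → k) ≠ 0 →
      ((φ v : Fin (n + 2) → k)) ∉ Submodule.span k {(v : Fin (n + 2) → k)})
    (V : ℕ → Submodule k (Fin (n + 2) → k))
    (hV₀ : V 0 = V0)
    (hVsucc : ∀ i, V (i + 1) = V i ⊓
      Submodule.map (W0.subtype.comp φ.toLinearMap) (Submodule.comap V0.subtype (V i))) :
    (∀ i ≤ n + 1, Module.finrank k ↥(V i) = n + 1 - i) ∧
      (∀ i ≤ n, V (i + 1) < V i) := by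
  have hle0 : ∀ i, V i ≤ V0 := by
    intro i
    induction i with
    | zero => exact hV₀.le
    | succ i ih => rw [hVsucc]; exact inf_le_left.trans ih
  obtain ⟨f, hf⟩ : ∃ f : V0 →ₗ[k] (Fin (n + 2) → k), f = W0.subtype.comp φ.toLinearMap := ⟨_, rfl⟩
  have hfv : ∀ v, f v = (φ v : Fin (n + 2) → k) := by intro v; rw [hf]; rfl
  have hinj : Function.Injective f := by
    intro a b hab
    rw [hfv, hfv] at hab
    exact φ.injective (Subtype.ext hab)
  rw [← hf] at hVsucc
  obtain ⟨W, hW⟩ : ∃ W : ℕ → Submodule k (Fin (n + 2) → k),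
      ∀ i, W i = Submodule.map f (Submodule.comap V0.subtype (V i)) := ⟨_, fun _ => rfl⟩
  simp only [← hW] at hVsucc
  have hWdim : ∀ i, Module.finrank k (W i) = Module.finrank k (V i) := by
    intro i
    rw [hW, ← (Submodule.equivMapOfInjective f hinj _).finrank_eq]
    exact (Submodule.comapSubtypeEquivOfLe (hle0 i)).finrank_eq
  have hdesc : ∀ i, V (i + 1) ≤ V i := fun i => by rw [hVsucc]; exact inf_le_left
  have hWdesc : ∀ i, W (i + 1) ≤ W i := fun i => by
    rw [hW, hW]; exact Submodule.map_mono (Submodule.comap_mono (hdesc i))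
  have hstrict : ∀ i, 0 < Module.finrank k (V i) → V (i + 1) < V i := by
    intro i hpos
    refine lt_of_le_of_ne (hdesc i) fun heq => ?_
    have hVW : V i ≤ W i := by
      rw [hVsucc] at heq
      exact inf_eq_left.mp heq
    have hE : V i = W i := Submodule.eq_of_le_of_finrank_eq hVW (hWdim i).symm
    have hmem : ∀ v : V i, (f.comp (Submodule.inclusion (hle0 i))) v ∈ V i := by
      intro v
      have : f (Submodule.inclusion (hle0 i) v) ∈ W i := by
        rw [hW]
        exact Submodule.mem_map_of_mem v.2
      rw [← hE] at this
      exact this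
    have : Nontrivial (V i) := Module.nontrivial_of_finrank_pos hpos
    obtain ⟨c, hc⟩ := Module.End.exists_eigenvalue
      (LinearMap.codRestrict (V i) (f.comp (Submodule.inclusion (hle0 i))) hmem)
    obtain ⟨v, hv⟩ := hc.exists_hasEigenvector
    have h1 := congrArg (Subtype.val) hv.apply_eq_smul
    refine hφ (Submodule.inclusion (hle0 i) v) (fun h => hv.2 (Subtype.ext h)) ?_
    rw [← hfv]
    exact Submodule.mem_span_singleton.mpr ⟨c, h1.symm⟩
  have key : ∀ i ≤ n + 1, Module.finrank k (V i) = n + 1 - i ∧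
      ∃ U : Submodule k (Fin (n + 2) → k),
        Module.finrank k U = n + 2 - i ∧ V i ≤ U ∧ W i ≤ U := by
    intro i
    induction i with
    | zero =>
      intro _
      refine ⟨by rw [hV₀, hV0dim]; rfl, ⊤, by simp, le_top, le_top⟩
    | succ i ih =>
      intro hi
      obtain ⟨hd, U, hU, h1, h2⟩ := ih (by omega)
      have hlt := Submodule.finrank_lt_finrank_of_lt (hstrict i (by omega))
      have hsum := Submodule.finrank_sup_add_finrank_inf_eq (V i) (W i)
      have hsup := Submodule.finrank_mono (sup_le h1 h2)
      rw [← hVsucc] at hsum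
      have hw := hWdim i
      refine ⟨by omega, W i, by omega, ?_, hWdesc i⟩
      rw [hVsucc]; exact inf_le_right
  refine ⟨fun i hi => (key i hi).1, fun i hi => hstrict i ?_⟩
  have := (key i (by omega)).1
  omega
end
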